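/- Fix an integer s ≥ 1 and a sequence p : ℕ → ℕ with p(n) → ∞ and p(n)/n → 0 as n → ∞. Then (1/p(n))·E[tr(Y^{−s})] → 1 as n → ∞, where the expectation is with respect to μ_{n,p(n)}. -/

import Mathlib

open MeasureTheory Matrix Filter

noncomputable section

/-- The law `μ_{n,p}` of an `n × p` matrix with independent standard Gaussian entries. -/
def gaussEnsemble (n p : ℕ) : Measure (Fin n → Fin p → ℝ) :=
  Measure.pi fun _ => Measure.pi fun _ => ProbabilityTheory.gaussianReal 0 1

/-- `Y(Z) = (1/n) Zᵀ Z`, the Wishart matrix `W_p(n, I_p/n)` built from the Gaussian matrix `Z`. -/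
def wishartOf {n p : ℕ} (Z : Fin n → Fin p → ℝ) : Matrix (Fin p) (Fin p) ℝ :=
  (n : ℝ)⁻¹ • ((Matrix.of Z)ᵀ * Matrix.of Z)

/-!
The negative moments of `ZᵀZ` are reached through the resolvent `R = (ZᵀZ + d)⁻¹` with `d > 0`,
whose powers are bounded and smooth in `Z`. Gaussian integration by parts in every entry of
`Z Rᵏ⁺¹`, together with Chebyshev's sum inequality `tr Rᵃ · tr Rᵇ ≤ p tr Rᵃ⁺ᵇ`, gives
`(n - (k + 1)(p + 1)) E[tr Rᵏ⁺¹] ≤ E[tr Rᵏ]`, uniformly in `d`. On the event that `ZᵀZ` is singular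
`tr R ≥ 1/d`, so Markov's inequality and the bound for `k = 0` show that this event is null as
`d → 0`. Iterating the recursion and applying Fatou's lemma then yields
`E[tr Y⁻ˢ] ≤ p (n / (n - s(p + 1)))ˢ`.

Conversely, Bernoulli's inequality for the eigenvalues of `Y⁻¹` and `tr Y⁻¹ ≥ 2p - tr Y` give
`tr Y⁻ˢ ≥ p - s (tr Y - p)`, and `E[tr Y] = p`, so `E[tr Y⁻ˢ] ≥ p`.
-/

section PosSemidefTrace

variable {m n : Type*} [Fintype n]

theorem sum_sum_mul_eq_trace_transpose_mul [Fintype m] (A B : Matrix m n ℝ) :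
    ∑ i, ∑ j, A i j * B i j = (Aᵀ * B).trace := by
  rw [Finset.sum_comm]
  simp [trace, mul_apply]

theorem posSemidef_apply_self_le_trace {A : Matrix n n ℝ} (hA : A.PosSemidef) (i : n) :
    A i i ≤ A.trace :=
  Finset.single_le_sum (f := fun i => A i i) (fun _ _ => hA.diag_nonneg) (Finset.mem_univ i)

theorem sq_apply_le_trace_transpose_mul_self [Fintype m] (A : Matrix m n ℝ) (i : m) (j : n) :
    A i j ^ 2 ≤ (Aᵀ * A).trace := by
  calc A i j ^ 2 ≤ ∑ k, A k j ^ 2 :=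
        Finset.single_le_sum (f := fun k => A k j ^ 2) (fun _ _ => sq_nonneg _) (Finset.mem_univ i)
    _ = (Aᵀ * A) j j := by simp [mul_apply, sq]
    _ ≤ (Aᵀ * A).trace :=
        posSemidef_apply_self_le_trace (by simpa using posSemidef_conjTranspose_mul_self A) j

theorem le_trace_of_mulVec_eq_smul {A : Matrix n n ℝ} (hA : A.PosSemidef) {v : n → ℝ} (hv : v ≠ 0)
    {c : ℝ} (hc : A *ᵥ v = c • v) : c ≤ A.trace := by
  classical
  have hmem : c ∈ spectrum ℝ A := by
    rw [← spectrum_toLin', ← Module.End.hasEigenvalue_iff_mem_spectrum]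
    exact Module.End.hasEigenvalue_of_hasEigenvector
      ⟨Module.End.mem_eigenspace_iff.2 (by rwa [toLin'_apply]), hv⟩
  obtain ⟨i, rfl⟩ := hA.1.spectrum_real_eq_range_eigenvalues ▸ hmem
  rw [hA.1.trace_eq_sum_eigenvalues]
  exact Finset.single_le_sum (fun j _ => hA.eigenvalues_nonneg j) (Finset.mem_univ i)

variable [DecidableEq n]

theorem trace_pow_eq_sum_eigenvalues_pow {𝕜 : Type*} [RCLike 𝕜] {A : Matrix n n 𝕜}
    (hA : A.IsHermitian) (k : ℕ) : (A ^ k).trace = ∑ i, (hA.eigenvalues i : 𝕜) ^ k := by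
  conv_lhs => rw [hA.spectral_theorem, ← map_pow, Unitary.conjStarAlgAut_apply, trace_mul_cycle,
    Unitary.coe_star_mul_self, one_mul, diagonal_pow, trace_diagonal]
  rfl

theorem trace_pow_mul_trace_pow_le {A : Matrix n n ℝ} (hA : A.PosSemidef) (a b : ℕ) :
    (A ^ a).trace * (A ^ b).trace ≤ Fintype.card n * (A ^ (a + b)).trace := by
  have hnonneg : ∀ i ∈ Finset.univ, 0 ≤ hA.1.eigenvalues i := fun i _ => hA.eigenvalues_nonneg i
  have hmono := ((monovaryOn_self hA.1.eigenvalues (Finset.univ : Finset n)).pow_left₀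
    hnonneg a).pow_right₀ hnonneg b
  simp only [trace_pow_eq_sum_eigenvalues_pow hA.1]
  simpa [pow_add] using hmono.sum_mul_sum_le_card_mul_sum

theorem card_add_mul_trace_sub_card_le_trace_pow {A : Matrix n n ℝ} (hA : A.PosSemidef) (s : ℕ) :
    Fintype.card n + s * (A.trace - Fintype.card n) ≤ (A ^ s).trace := by
  rw [hA.1.trace_eq_sum_eigenvalues, trace_pow_eq_sum_eigenvalues_pow hA.1]
  calc (Fintype.card n + s * (∑ i, hA.1.eigenvalues i - Fintype.card n) : ℝ)
      = ∑ i, (1 + s * (hA.1.eigenvalues i - 1)) := by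
        simp [Finset.sum_add_distrib, ← Finset.mul_sum]
    _ ≤ ∑ i, hA.1.eigenvalues i ^ s := Finset.sum_le_sum fun i _ =>
        one_add_mul_sub_le_pow (by linarith [hA.eigenvalues_nonneg i]) s

theorem two_mul_card_sub_trace_le_trace_inv {A : Matrix n n ℝ} (hA : A.PosDef) :
    2 * Fintype.card n - A.trace ≤ (A⁻¹).trace := by
  have hunit : IsUnit A.det := (isUnit_iff_isUnit_det A).1 hA.isUnit
  have hpsd := hA.inv.posSemidef.conjTranspose_mul_mul_same (1 - A)
  have hexpand : (1 - A)ᴴ * A⁻¹ * (1 - A) = A⁻¹ - 1 - (1 - A) := by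
    rw [(isHermitian_one.sub hA.isHermitian).eq, sub_mul, mul_nonsing_inv _ hunit, sub_mul,
      mul_sub, one_mul, mul_one, nonsing_inv_mul _ hunit, one_mul]
  have := hpsd.trace_nonneg
  rw [hexpand, trace_sub, trace_sub, trace_sub, trace_one] at this
  linarith

theorem card_sub_mul_trace_sub_card_le_trace_inv_pow {A : Matrix n n ℝ} (hA : A.PosDef) (s : ℕ) :
    Fintype.card n - s * (A.trace - Fintype.card n) ≤ (A⁻¹ ^ s).trace := by
  have h := mul_le_mul_of_nonneg_left (two_mul_card_sub_trace_le_trace_inv hA) s.cast_nonneg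
  linarith [card_add_mul_trace_sub_card_le_trace_pow hA.inv.posSemidef s]

end PosSemidefTrace

theorem continuousAt_inv_of_isUnit {n K : Type*} [Fintype n] [DecidableEq n] [Field K]
    [TopologicalSpace K] [IsTopologicalDivisionRing K] {A : Matrix n n K} (hA : IsUnit A) :
    ContinuousAt Inv.inv A := by
  refine continuousAt_matrix_inv A ?_
  rw [Ring.inverse_eq_inv']
  exact continuousAt_inv₀ ((isUnit_iff_isUnit_det A).1 hA).ne_zero

section GramResolvent

variable {m n : Type*} [Fintype m] [DecidableEq n]

theorem posDef_gram_add_smul_one [Finite n] (Z : Matrix m n ℝ) {d : ℝ} (hd : 0 < d) :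
    (Zᵀ * Z + d • 1).PosDef :=
  PosDef.posSemidef_add (posSemidef_conjTranspose_mul_self Z) (PosDef.one.smul hd)

variable [Fintype n]

/-- The resolvent `(ZᵀZ + d)⁻¹` of the Gram matrix of `Z`, a regularisation of `(ZᵀZ)⁻¹`. -/
def gramResolvent (d : ℝ) (Z : Matrix m n ℝ) : Matrix n n ℝ := (Zᵀ * Z + d • 1)⁻¹

theorem isUnit_det_gram_add_smul_one (Z : Matrix m n ℝ) {d : ℝ} (hd : 0 < d) :
    IsUnit (Zᵀ * Z + d • 1).det :=
  (isUnit_iff_isUnit_det _).1 (posDef_gram_add_smul_one Z hd).isUnit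

theorem posDef_gramResolvent (Z : Matrix m n ℝ) {d : ℝ} (hd : 0 < d) :
    (gramResolvent d Z).PosDef :=
  (posDef_gram_add_smul_one Z hd).inv

theorem posSemidef_gramResolvent_pow (Z : Matrix m n ℝ) {d : ℝ} (hd : 0 < d) (k : ℕ) :
    (gramResolvent d Z ^ k).PosSemidef :=
  (posDef_gramResolvent Z hd).posSemidef.pow k

theorem transpose_gramResolvent (d : ℝ) (Z : Matrix m n ℝ) :
    (gramResolvent d Z)ᵀ = gramResolvent d Z := by
  simp [gramResolvent, transpose_nonsing_inv]

theorem gram_mul_gramResolvent_pow_succ (Z : Matrix m n ℝ) {d : ℝ} (hd : 0 < d) (k : ℕ) :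
    Zᵀ * Z * gramResolvent d Z ^ (k + 1) =
      gramResolvent d Z ^ k - d • gramResolvent d Z ^ (k + 1) := by
  have hinv : (Zᵀ * Z + d • 1) * gramResolvent d Z = 1 :=
    mul_nonsing_inv _ (isUnit_det_gram_add_smul_one Z hd)
  calc Zᵀ * Z * gramResolvent d Z ^ (k + 1)
      = (Zᵀ * Z + d • 1) * gramResolvent d Z * gramResolvent d Z ^ k -
          d • gramResolvent d Z ^ (k + 1) := by
        rw [mul_assoc _ (gramResolvent d Z), ← pow_succ', add_mul, smul_one_mul,
          add_sub_cancel_right]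
    _ = _ := by rw [hinv, one_mul]

theorem trace_gram_mul_gramResolvent_pow_le (Z : Matrix m n ℝ) {d : ℝ} (hd : 0 < d) (k : ℕ) :
    (Zᵀ * Z * gramResolvent d Z ^ (k + 1)).trace ≤ (gramResolvent d Z ^ k).trace := by
  rw [gram_mul_gramResolvent_pow_succ Z hd, trace_sub, trace_smul, smul_eq_mul]
  linarith [mul_nonneg hd.le (posSemidef_gramResolvent_pow Z hd (k + 1)).trace_nonneg]

theorem posSemidef_mul_gramResolvent_pow_mul_transpose (Z : Matrix m n ℝ) {d : ℝ} (hd : 0 < d)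
    (k : ℕ) : (Z * gramResolvent d Z ^ k * Zᵀ).PosSemidef :=
  (posSemidef_gramResolvent_pow Z hd k).mul_mul_conjTranspose_same Z

theorem trace_gram_mul_gramResolvent_pow_nonneg (Z : Matrix m n ℝ) {d : ℝ} (hd : 0 < d) (k : ℕ) :
    0 ≤ (Zᵀ * Z * gramResolvent d Z ^ k).trace := by
  rw [← trace_mul_cycle]
  exact (posSemidef_mul_gramResolvent_pow_mul_transpose Z hd k).trace_nonneg

theorem trace_gramResolvent_pow_le (Z : Matrix m n ℝ) {d : ℝ} (hd : 0 < d) (k : ℕ) :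
    (gramResolvent d Z ^ k).trace ≤ Fintype.card n / d ^ k := by
  induction k with
  | zero => simp
  | succ k ih =>
    have h := trace_gram_mul_gramResolvent_pow_nonneg Z hd (k + 1)
    rw [gram_mul_gramResolvent_pow_succ Z hd, trace_sub, trace_smul, smul_eq_mul] at h
    rw [pow_succ d, ← div_div, le_div_iff₀ hd]
    linarith

theorem trace_transpose_mul_mul_gramResolvent_pow (Z : Matrix m n ℝ) (d : ℝ) (a b : ℕ) :
    ((Z * gramResolvent d Z ^ a)ᵀ * (Z * gramResolvent d Z ^ b)).trace =
      (Zᵀ * Z * gramResolvent d Z ^ (a + b)).trace := by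
  rw [transpose_mul, transpose_pow, transpose_gramResolvent, Matrix.mul_assoc, trace_mul_comm,
    ← Matrix.mul_assoc, Matrix.mul_assoc, ← pow_add, add_comm b]

theorem abs_gramResolvent_pow_apply_self_le (Z : Matrix m n ℝ) {d : ℝ} (hd : 0 < d) (k : ℕ)
    (j : n) : |(gramResolvent d Z ^ k) j j| ≤ Fintype.card n / d ^ k := by
  have hpsd := posSemidef_gramResolvent_pow Z hd k
  rw [abs_of_nonneg hpsd.diag_nonneg]
  exact (posSemidef_apply_self_le_trace hpsd j).trans (trace_gramResolvent_pow_le Z hd k)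

theorem abs_mul_gramResolvent_pow_mul_transpose_apply_self_le (Z : Matrix m n ℝ) {d : ℝ}
    (hd : 0 < d) (k : ℕ) (i : m) :
    |(Z * gramResolvent d Z ^ (k + 1) * Zᵀ) i i| ≤ Fintype.card n / d ^ k := by
  have hpsd := posSemidef_mul_gramResolvent_pow_mul_transpose Z hd (k + 1)
  rw [abs_of_nonneg hpsd.diag_nonneg]
  calc (Z * gramResolvent d Z ^ (k + 1) * Zᵀ) i i
      ≤ (Z * gramResolvent d Z ^ (k + 1) * Zᵀ).trace := posSemidef_apply_self_le_trace hpsd i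
    _ = (Zᵀ * Z * gramResolvent d Z ^ (k + 1)).trace := trace_mul_cycle _ _ _
    _ ≤ (gramResolvent d Z ^ k).trace := trace_gram_mul_gramResolvent_pow_le Z hd k
    _ ≤ Fintype.card n / d ^ k := trace_gramResolvent_pow_le Z hd k

theorem abs_mul_gramResolvent_pow_apply_le (Z : Matrix m n ℝ) {d : ℝ} (hd : 0 < d) (k : ℕ)
    (i : m) (j : n) :
    |(Z * gramResolvent d Z ^ (k + 1)) i j| ≤ √(Fintype.card n / d ^ (2 * k + 1)) := by
  refine Real.abs_le_sqrt ?_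
  calc (Z * gramResolvent d Z ^ (k + 1)) i j ^ 2
      ≤ ((Z * gramResolvent d Z ^ (k + 1))ᵀ * (Z * gramResolvent d Z ^ (k + 1))).trace :=
        sq_apply_le_trace_transpose_mul_self _ i j
    _ = (Zᵀ * Z * gramResolvent d Z ^ (2 * k + 1 + 1)).trace := by
        rw [trace_transpose_mul_mul_gramResolvent_pow]
        congr 3
        ring
    _ ≤ (gramResolvent d Z ^ (2 * k + 1)).trace := trace_gram_mul_gramResolvent_pow_le Z hd _
    _ ≤ Fintype.card n / d ^ (2 * k + 1) := trace_gramResolvent_pow_le Z hd _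

theorem inv_le_trace_gramResolvent_of_not_isUnit (Z : Matrix m n ℝ) {d : ℝ} (hd : 0 < d)
    (hZ : ¬IsUnit (Zᵀ * Z)) : d⁻¹ ≤ (gramResolvent d Z).trace := by
  obtain ⟨v, hv, hZv⟩ := exists_mulVec_eq_zero_iff.2
    (by simpa [isUnit_iff_isUnit_det, isUnit_iff_ne_zero] using hZ : (Zᵀ * Z).det = 0)
  refine le_trace_of_mulVec_eq_smul (posDef_gramResolvent Z hd).posSemidef hv ?_
  have hdv : (Zᵀ * Z + d • 1) *ᵥ v = d • v := by rw [add_mulVec, hZv]; simp [smul_mulVec]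
  calc gramResolvent d Z *ᵥ v = d⁻¹ • gramResolvent d Z *ᵥ (d • v) := by
        rw [mulVec_smul, inv_smul_smul₀ hd.ne']
    _ = d⁻¹ • v := by
        rw [← hdv, mulVec_mulVec, gramResolvent,
          nonsing_inv_mul _ (isUnit_det_gram_add_smul_one Z hd), one_mulVec]

theorem continuous_gramResolvent {d : ℝ} (hd : 0 < d) :
    Continuous fun Z : Matrix m n ℝ => gramResolvent d Z :=
  continuous_iff_continuousAt.2 fun Z =>
    ContinuousAt.comp (f := fun Z : Matrix m n ℝ => Zᵀ * Z + d • (1 : Matrix n n ℝ))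
      (continuousAt_inv_of_isUnit (posDef_gram_add_smul_one Z hd).isUnit) (by fun_prop)

theorem tendsto_gramResolvent {Z : Matrix m n ℝ} (hZ : IsUnit (Zᵀ * Z)) :
    Tendsto (fun d => gramResolvent d Z) (nhds 0) (nhds (Zᵀ * Z)⁻¹) := by
  have hinv : ContinuousAt Inv.inv (Zᵀ * Z + (0 : ℝ) • 1) :=
    continuousAt_inv_of_isUnit (by simpa using hZ)
  have hcont : ContinuousAt (fun d => gramResolvent d Z) 0 :=
    hinv.comp (f := fun d : ℝ => Zᵀ * Z + d • 1) (by fun_prop)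
  simpa [ContinuousAt, gramResolvent] using hcont

end GramResolvent

section LineDeriv

open Finset.HasAntidiagonal (antidiagonal)

theorem hasDerivAt_ringInverse_pow_succ {𝕜 𝔸 : Type*} [NontriviallyNormedField 𝕜] [NormedRing 𝔸]
    [NormedAlgebra 𝕜 𝔸] [HasSummableGeomSeries 𝔸] {f : 𝕜 → 𝔸} {f' : 𝔸} {x : 𝕜}
    (hf : HasDerivAt f f' x) (hx : IsUnit (f x)) (k : ℕ) :
    HasDerivAt (fun y => Ring.inverse (f y) ^ (k + 1))
      (-∑ q ∈ antidiagonal k,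
        Ring.inverse (f x) ^ (q.1 + 1) * f' * Ring.inverse (f x) ^ (q.2 + 1)) x := by
  obtain ⟨u, hu⟩ := hx
  have hinv : HasDerivAt (fun y => Ring.inverse (f y)) (-(↑u⁻¹ * f' * ↑u⁻¹)) x := by
    simpa [Function.comp_def] using
      (hu ▸ hasFDerivAt_ringInverse (𝕜 := 𝕜) u).comp_hasDerivAt x hf
  convert hinv.fun_pow' (k + 1) using 1
  rw [← Finset.Nat.sum_antidiagonal_swap, Finset.Nat.sum_antidiagonal_eq_sum_range_succ_mk,
    ← Finset.sum_neg_distrib]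
  refine Finset.sum_congr rfl fun a _ => ?_
  simp only [Prod.swap, Nat.pred_succ, ← hu, Ring.inverse_unit, pow_succ _ (k - a), pow_succ' _ a,
    mul_neg, neg_mul, mul_assoc]

theorem hasDerivAt_quadratic_zero {𝕜 E : Type*} [NontriviallyNormedField 𝕜]
    [NormedAddCommGroup E] [NormedSpace 𝕜 E] (a b c : E) :
    HasDerivAt (fun t : 𝕜 => a + t • b + t ^ 2 • c) b 0 := by
  have hlin := (hasDerivAt_id (0 : 𝕜)).smul_const b
  have hquad := (hasDerivAt_pow 2 (0 : 𝕜)).smul_const c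
  simpa using (hlin.const_add a).fun_add hquad

variable {m n : Type*} [Fintype m] [Fintype n] [DecidableEq n]

theorem hasDerivAt_inv_quadratic_pow_succ_apply {A : Matrix n n ℝ} (hA : IsUnit A)
    (B C : Matrix n n ℝ) (k : ℕ) (i j : n) :
    HasDerivAt (fun t : ℝ => ((A + t • B + t ^ 2 • C)⁻¹ ^ (k + 1)) i j)
      ((-∑ q ∈ antidiagonal k, A⁻¹ ^ (q.1 + 1) * B * A⁻¹ ^ (q.2 + 1)) i j) 0 := by
  have hzero : A + (0 : ℝ) • B + (0 : ℝ) ^ 2 • C = A := by simp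
  let := Matrix.linftyOpNormedRing (n := n) (α := ℝ)
  let := Matrix.linftyOpNormedAlgebra (R := ℝ) (n := n) (α := ℝ)
  have hpow := hasDerivAt_ringInverse_pow_succ (hasDerivAt_quadratic_zero A B C)
    (hzero.symm ▸ hA) k
  simp only [hzero] at hpow
  simp only [nonsing_inv_eq_ringInverse]
  exact (entryLinearMap ℝ ℝ i j).toContinuousLinearMap.hasFDerivAt.comp_hasDerivAt (0 : ℝ) hpow

theorem hasDerivAt_mul_apply {l m n : Type*} [Fintype m] {A : ℝ → Matrix l m ℝ}
    {B : ℝ → Matrix m n ℝ} {A' : Matrix l m ℝ} {B' : Matrix m n ℝ} {t : ℝ} {i : l} {j : n}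
    (hA : ∀ c, HasDerivAt (fun u => A u i c) (A' i c) t)
    (hB : ∀ c, HasDerivAt (fun u => B u c j) (B' c j) t) :
    HasDerivAt (fun u => (A u * B u) i j) ((A' * B t + A t * B') i j) t := by
  simp only [mul_apply, Matrix.add_apply, ← Finset.sum_add_distrib]
  exact HasDerivAt.fun_sum fun c _ => (hA c).fun_mul (hB c)

theorem hasLineDerivAt_mul_gramResolvent_pow_apply (Z V : Matrix m n ℝ) {d : ℝ} (hd : 0 < d)
    (k : ℕ) (i : m) (j : n) :
    HasLineDerivAt ℝ (fun Z => (Z * gramResolvent d Z ^ (k + 1)) i j)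
      ((V * gramResolvent d Z ^ (k + 1)) i j -
        ∑ q ∈ antidiagonal k, (Z * gramResolvent d Z ^ (q.1 + 1) * (Zᵀ * V + Vᵀ * Z) *
          gramResolvent d Z ^ (q.2 + 1)) i j) Z V := by
  have hgram : ∀ t : ℝ, (Z + t • V)ᵀ * (Z + t • V) + d • 1 =
      Zᵀ * Z + d • 1 + t • (Zᵀ * V + Vᵀ * Z) + t ^ 2 • (Vᵀ * V) := fun t => by
    simp [Matrix.add_mul, Matrix.mul_add, smul_smul, sq]
    abel
  have hR : ∀ l, HasDerivAt (fun t : ℝ => (gramResolvent d (Z + t • V) ^ (k + 1)) l j)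
      ((-∑ q ∈ antidiagonal k, gramResolvent d Z ^ (q.1 + 1) * (Zᵀ * V + Vᵀ * Z) *
        gramResolvent d Z ^ (q.2 + 1)) l j) 0 := fun l => by
    simpa only [gramResolvent, hgram] using hasDerivAt_inv_quadratic_pow_succ_apply
      (posDef_gram_add_smul_one Z hd).isUnit (Zᵀ * V + Vᵀ * Z) (Vᵀ * V) k l j
  have hZ : ∀ l, HasDerivAt (fun t : ℝ => (Z + t • V) i l) (V i l) 0 := fun l => by
    simpa using ((hasDerivAt_id (0 : ℝ)).mul_const (V i l)).const_add (Z i l)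
  refine (hasDerivAt_mul_apply hZ hR).congr_deriv ?_
  simp [Matrix.mul_sum, Matrix.sum_apply, Matrix.mul_assoc, sub_eq_add_neg]

theorem mul_single_one_mul_apply {l o : Type*} [DecidableEq m] (A : Matrix l m ℝ)
    (B : Matrix n o ℝ) (i : m) (j : n) (a : l) (b : o) :
    (A * (single i j 1 : Matrix m n ℝ) * B) a b = A a i * B j b := by
  rw [mul_apply, Finset.sum_eq_single_of_mem j (Finset.mem_univ j) fun c _ hc => by
    rw [mul_single_apply_of_ne (hbj := hc), zero_mul], mul_single_apply_same, mul_one]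

/-- The partial derivative `∂(Z Rᵏ⁺¹)ᵢⱼ / ∂Zᵢⱼ`, where `R = gramResolvent d Z`. -/
def partialMulGramResolventPow (d : ℝ) (k : ℕ) (i : m) (j : n) (Z : Matrix m n ℝ) : ℝ :=
  (gramResolvent d Z ^ (k + 1)) j j - ∑ q ∈ antidiagonal k,
    ((Z * gramResolvent d Z ^ (q.1 + 1) * Zᵀ) i i * (gramResolvent d Z ^ (q.2 + 1)) j j +
      (Z * gramResolvent d Z ^ (q.1 + 1)) i j * (Z * gramResolvent d Z ^ (q.2 + 1)) i j)

theorem hasLineDerivAt_single_mul_gramResolvent_pow_apply [DecidableEq m] (Z : Matrix m n ℝ)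
    {d : ℝ} (hd : 0 < d) (k : ℕ) (i : m) (j : n) :
    HasLineDerivAt ℝ (fun Z => (Z * gramResolvent d Z ^ (k + 1)) i j)
      (partialMulGramResolventPow d k i j Z) Z (single i j 1) := by
  convert hasLineDerivAt_mul_gramResolvent_pow_apply Z (single i j 1) hd k i j using 1
  have hsplit (A B : Matrix n n ℝ) :
      (Z * A * (Zᵀ * (single i j 1 : Matrix m n ℝ) + (single i j 1 : Matrix m n ℝ)ᵀ * Z) * B) i j =
        (Z * A * Zᵀ) i i * B j j + (Z * A) i j * (Z * B) i j := by
    rw [Matrix.mul_add, Matrix.add_mul, Matrix.add_apply, ← Matrix.mul_assoc,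
      mul_single_one_mul_apply, transpose_single, ← Matrix.mul_assoc, Matrix.mul_assoc _ Z,
      mul_single_one_mul_apply]
  have hdirect (A : Matrix n n ℝ) : ((single i j 1 : Matrix m n ℝ) * A) i j = A j j := by simp
  simp only [partialMulGramResolventPow, hsplit, hdirect]

theorem exists_abs_partialMulGramResolventPow_le {d : ℝ} (hd : 0 < d) (k : ℕ) (i : m) (j : n) :
    ∃ C, ∀ Z : Matrix m n ℝ, |partialMulGramResolventPow d k i j Z| ≤ C := by
  refine ⟨Fintype.card n / d ^ (k + 1) + ∑ q ∈ antidiagonal k,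
    (Fintype.card n / d ^ q.1 * (Fintype.card n / d ^ (q.2 + 1)) +
      √(Fintype.card n / d ^ (2 * q.1 + 1)) * √(Fintype.card n / d ^ (2 * q.2 + 1))), fun Z => ?_⟩
  calc |partialMulGramResolventPow d k i j Z|
      ≤ |(gramResolvent d Z ^ (k + 1)) j j| + ∑ q ∈ antidiagonal k,
          (|(Z * gramResolvent d Z ^ (q.1 + 1) * Zᵀ) i i| * |(gramResolvent d Z ^ (q.2 + 1)) j j| +
            |(Z * gramResolvent d Z ^ (q.1 + 1)) i j| *
              |(Z * gramResolvent d Z ^ (q.2 + 1)) i j|) := by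
        simp_rw [← abs_mul]
        refine (abs_sub _ _).trans ?_
        gcongr
        exact (Finset.abs_sum_le_sum_abs _ _).trans (Finset.sum_le_sum fun _ _ => abs_add_le _ _)
    _ ≤ _ := by
        gcongr <;> first
          | exact abs_gramResolvent_pow_apply_self_le Z hd _ j
          | exact abs_mul_gramResolvent_pow_mul_transpose_apply_self_le Z hd _ i
          | exact abs_mul_gramResolvent_pow_apply_le Z hd _ i j

theorem continuous_partialMulGramResolventPow {d : ℝ} (hd : 0 < d) (k : ℕ) (i : m) (j : n) :
    Continuous (partialMulGramResolventPow (m := m) (n := n) d k i j) := by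
  have hR := continuous_gramResolvent (m := m) (n := n) hd
  unfold partialMulGramResolventPow
  fun_prop

theorem sum_partialMulGramResolventPow (d : ℝ) (k : ℕ) (Z : Matrix m n ℝ) :
    ∑ i, ∑ j, partialMulGramResolventPow d k i j Z =
      Fintype.card m * (gramResolvent d Z ^ (k + 1)).trace - ∑ q ∈ antidiagonal k,
        ((Zᵀ * Z * gramResolvent d Z ^ (q.1 + 1)).trace * (gramResolvent d Z ^ (q.2 + 1)).trace +
          (Zᵀ * Z * gramResolvent d Z ^ (k + 1 + 1)).trace) := by
  have htrace (a b : ℕ) : ∑ i, ∑ j, ((Z * gramResolvent d Z ^ (a + 1) * Zᵀ) i i *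
      (gramResolvent d Z ^ (b + 1)) j j + (Z * gramResolvent d Z ^ (a + 1)) i j *
        (Z * gramResolvent d Z ^ (b + 1)) i j) =
      (Zᵀ * Z * gramResolvent d Z ^ (a + 1)).trace * (gramResolvent d Z ^ (b + 1)).trace +
        (Zᵀ * Z * gramResolvent d Z ^ (a + 1 + (b + 1))).trace := by
    simp_rw [Finset.sum_add_distrib, sum_sum_mul_eq_trace_transpose_mul,
      trace_transpose_mul_mul_gramResolvent_pow, ← trace_mul_cycle Z, ← Finset.sum_mul_sum]
    rfl
  simp only [partialMulGramResolventPow, Finset.sum_sub_distrib]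
  congr 1
  · simp [trace]
  · simp_rw [Finset.sum_comm (s := Finset.univ) (t := antidiagonal k), htrace]
    refine Finset.sum_congr rfl fun q hq => ?_
    rw [← Finset.HasAntidiagonal.mem_antidiagonal.1 hq]
    ring_nf

theorem sub_mul_trace_gramResolvent_pow_le_sum_partialMulGramResolventPow (Z : Matrix m n ℝ)
    {d : ℝ} (hd : 0 < d) (k : ℕ) :
    (Fintype.card m - (k + 1) * (Fintype.card n + 1)) * (gramResolvent d Z ^ (k + 1)).trace ≤
      ∑ i, ∑ j, partialMulGramResolventPow d k i j Z := by
  have hterm : ∀ q ∈ antidiagonal k,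
      (Zᵀ * Z * gramResolvent d Z ^ (q.1 + 1)).trace * (gramResolvent d Z ^ (q.2 + 1)).trace +
        (Zᵀ * Z * gramResolvent d Z ^ (k + 1 + 1)).trace ≤
      (Fintype.card n + 1) * (gramResolvent d Z ^ (k + 1)).trace := fun q hq => by
    rw [add_one_mul]
    refine add_le_add ?_ (trace_gram_mul_gramResolvent_pow_le Z hd (k + 1))
    calc (Zᵀ * Z * gramResolvent d Z ^ (q.1 + 1)).trace * (gramResolvent d Z ^ (q.2 + 1)).trace
        ≤ (gramResolvent d Z ^ q.1).trace * (gramResolvent d Z ^ (q.2 + 1)).trace :=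
          mul_le_mul_of_nonneg_right (trace_gram_mul_gramResolvent_pow_le Z hd q.1)
            (posSemidef_gramResolvent_pow Z hd _).trace_nonneg
      _ ≤ Fintype.card n * (gramResolvent d Z ^ (q.1 + (q.2 + 1))).trace :=
          trace_pow_mul_trace_pow_le (posDef_gramResolvent Z hd).posSemidef _ _
      _ = Fintype.card n * (gramResolvent d Z ^ (k + 1)).trace := by
          rw [← add_assoc, Finset.HasAntidiagonal.mem_antidiagonal.1 hq]
  have hsum := Finset.sum_le_card_nsmul _ _ _ hterm
  rw [Finset.Nat.card_antidiagonal, nsmul_eq_mul] at hsum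
  rw [sum_partialMulGramResolventPow]
  push_cast at hsum
  linarith

end LineDeriv

section GaussianIntegrationByParts

open ProbabilityTheory

theorem hasDerivAt_gaussianPDFReal (μ : ℝ) (v : NNReal) (x : ℝ) :
    HasDerivAt (gaussianPDFReal μ v) (-((x - μ) / v * gaussianPDFReal μ v x)) x := by
  have hexponent : HasDerivAt (fun y => -(y - μ) ^ 2 / (2 * v)) (-((x - μ) / v)) x := by
    refine ((((hasDerivAt_id' x).sub_const μ).fun_pow 2).fun_neg.div_const _).congr_deriv ?_
    norm_num [mul_div_mul_left, neg_div]
  refine (hexponent.exp.const_mul (√(2 * Real.pi * v))⁻¹).congr_deriv ?_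
  rw [gaussianPDFReal]
  ring

theorem integrable_gaussianReal_iff {E : Type*} [NormedAddCommGroup E] [NormedSpace ℝ E] (μ : ℝ)
    {v : NNReal} (hv : v ≠ 0) (f : ℝ → E) :
    Integrable f (gaussianReal μ v) ↔ Integrable fun x => gaussianPDFReal μ v x • f x := by
  rw [gaussianReal_of_var_ne_zero μ hv, integrable_withDensity_iff_integrable_smul'
    (measurable_gaussianPDF μ v) (by simp [gaussianPDF])]
  simp only [toReal_gaussianPDF]

theorem integral_sub_mul_gaussianReal {μ : ℝ} {v : NNReal} {f f' : ℝ → ℝ}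
    (hderiv : ∀ x, HasDerivAt f (f' x) x) (hf : Integrable f (gaussianReal μ v))
    (hf' : Integrable f' (gaussianReal μ v))
    (hmul : Integrable (fun x => (x - μ) * f x) (gaussianReal μ v)) :
    ∫ x, (x - μ) * f x ∂gaussianReal μ v = v * ∫ x, f' x ∂gaussianReal μ v := by
  rcases eq_or_ne v 0 with rfl | hv
  · simp
  simp only [integrable_gaussianReal_iff μ hv, smul_eq_mul] at hf hf' hmul
  have hv' : (v : ℝ) ≠ 0 := by exact_mod_cast hv
  have hprod (x : ℝ) : HasDerivAt (fun x => gaussianPDFReal μ v x * f x)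
      (gaussianPDFReal μ v x * f' x - (v : ℝ)⁻¹ * (gaussianPDFReal μ v x * ((x - μ) * f x))) x :=
    ((hasDerivAt_gaussianPDFReal μ v x).fun_mul (hderiv x)).congr_deriv (by ring)
  have hzero := integral_eq_zero_of_hasDerivAt_of_integrable hprod
    (hf'.sub (hmul.const_mul _)) hf
  rw [integral_sub hf' (hmul.const_mul _), integral_const_mul, sub_eq_zero] at hzero
  simp only [integral_gaussianReal_eq_integral_smul hv, smul_eq_mul, hzero]
  rw [mul_inv_cancel_left₀ hv']

theorem hasDerivAt_update_of_hasLineDerivAt {𝕜 E ι : Type*} [NontriviallyNormedField 𝕜]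
    [DecidableEq ι] [NormedAddCommGroup E] [NormedSpace 𝕜 E] {f : (ι → 𝕜) → E} {f' : E}
    {x : ι → 𝕜} {i : ι} {t : 𝕜}
    (hf : HasLineDerivAt 𝕜 f f' (Function.update x i t) (Pi.single i 1)) :
    HasDerivAt (fun u => f (Function.update x i u)) f' t := by
  have hshift := HasDerivAt.scomp_of_eq t hf ((hasDerivAt_id t).sub_const t) (by simp)
  rw [one_smul] at hshift
  refine hshift.congr_of_eventuallyEq (Eventually.of_forall fun u => congrArg f ?_)
  ext j
  rcases eq_or_ne j i with rfl | hj <;> simp_all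

variable {ι : Type*} [Fintype ι] [DecidableEq ι]

theorem measurePreserving_update {X : ι → Type*} [∀ i, MeasurableSpace (X i)]
    (μ : ∀ i, Measure (X i)) [∀ i, IsProbabilityMeasure (μ i)] (i : ι) :
    MeasurePreserving (fun q : (∀ i, X i) × X i => Function.update q.1 i q.2)
      ((Measure.pi μ).prod (μ i)) (Measure.pi μ) := by
  have hmeas : Measurable fun q : (∀ i, X i) × X i => Function.update q.1 i q.2 := by
    refine measurable_pi_iff.2 fun j => ?_
    rcases eq_or_ne j i with rfl | hj
    · simpa using measurable_snd
    · simp only [Function.update_of_ne hj]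
      fun_prop
  refine ⟨hmeas, (Measure.pi_eq fun s hs => ?_).symm⟩
  have hpreimage : (fun q : (∀ i, X i) × X i => Function.update q.1 i q.2) ⁻¹' Set.univ.pi s =
      Set.univ.pi (Function.update s i Set.univ) ×ˢ s i := by
    ext q
    simp only [Set.mem_preimage, Set.mem_univ_pi, Set.mem_prod]
    refine ⟨fun h => ⟨fun j => ?_, by simpa using h i⟩, fun h j => ?_⟩
    · have := h j
      rcases eq_or_ne j i with rfl | hj <;> simp_all
    · have := h.1 j
      rcases eq_or_ne j i with rfl | hj <;> simp_all
  rw [Measure.map_apply hmeas (MeasurableSet.univ_pi hs), hpreimage, Measure.prod_prod,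
    Measure.pi_pi, ← Finset.prod_erase_mul _ _ (Finset.mem_univ i),
    ← Finset.prod_erase_mul _ (fun i => μ i (s i)) (Finset.mem_univ i)]
  simp only [Function.update_self, measure_univ, mul_one]
  congr 1
  refine Finset.prod_congr rfl fun j hj => ?_
  rw [Function.update_of_ne (Finset.ne_of_mem_erase hj)]

theorem integral_pi_eq_integral_integral_update {X : ι → Type*} [∀ i, MeasurableSpace (X i)]
    {E : Type*} [NormedAddCommGroup E] [NormedSpace ℝ E] {μ : ∀ i, Measure (X i)}
    [∀ i, IsProbabilityMeasure (μ i)] (i : ι) {f : (∀ i, X i) → E}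
    (hf : Integrable f (Measure.pi μ)) :
    ∫ x, f x ∂Measure.pi μ = ∫ x, ∫ t, f (Function.update x i t) ∂μ i ∂Measure.pi μ := by
  have hupdate := measurePreserving_update μ i
  calc ∫ x, f x ∂Measure.pi μ
      = ∫ q, f (Function.update q.1 i q.2) ∂(Measure.pi μ).prod (μ i) := by
        conv_lhs => rw [← hupdate.map_eq]
        exact integral_map hupdate.measurable.aemeasurable
          (hupdate.map_eq.symm ▸ hf.aestronglyMeasurable)
    _ = _ := integral_prod _ (hupdate.integrable_comp_of_integrable hf)

theorem integral_sub_mul_pi_gaussianReal {μ : ι → ℝ} {v : ι → NNReal} {f f' : (ι → ℝ) → ℝ} {i : ι}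
    (hderiv : ∀ x, HasLineDerivAt ℝ f (f' x) x (Pi.single i 1))
    (hf : Integrable f (Measure.pi fun i => gaussianReal (μ i) (v i)))
    (hf' : Integrable f' (Measure.pi fun i => gaussianReal (μ i) (v i)))
    (hmul : Integrable (fun x => (x i - μ i) * f x)
      (Measure.pi fun i => gaussianReal (μ i) (v i))) :
    ∫ x, (x i - μ i) * f x ∂Measure.pi (fun i => gaussianReal (μ i) (v i)) =
      v i * ∫ x, f' x ∂Measure.pi fun i => gaussianReal (μ i) (v i) := by
  have hupdate := measurePreserving_update (fun i => gaussianReal (μ i) (v i)) i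
  rw [integral_pi_eq_integral_integral_update i hmul,
    integral_pi_eq_integral_integral_update i hf', ← integral_const_mul]
  refine integral_congr_ae ?_
  filter_upwards [(hupdate.integrable_comp_of_integrable hf).prod_right_ae,
    (hupdate.integrable_comp_of_integrable hf').prod_right_ae,
    (hupdate.integrable_comp_of_integrable hmul).prod_right_ae] with x hfx hfx' hmulx
  simp only [Function.comp_apply, Function.update_self] at hmulx
  simpa using integral_sub_mul_gaussianReal
    (fun t => hasDerivAt_update_of_hasLineDerivAt (hderiv (Function.update x i t))) hfx hfx' hmulx

end GaussianIntegrationByParts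

section GaussEnsemble

open ProbabilityTheory

theorem measurePreserving_curry {ι κ X : Type*} [Fintype ι] [Fintype κ] [MeasurableSpace X]
    (μ : ι → κ → Measure X) [∀ i j, IsProbabilityMeasure (μ i j)] :
    MeasurePreserving (MeasurableEquiv.curry ι κ X) (Measure.pi fun q : ι × κ => μ q.1 q.2)
      (Measure.pi fun i => Measure.pi (μ i)) :=
  ⟨(MeasurableEquiv.curry ι κ X).measurable, by
    simpa only [Measure.infinitePi_eq_pi] using Measure.infinitePi_map_curry μ⟩

variable {n p : ℕ}

instance : IsProbabilityMeasure (gaussEnsemble n p) := by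
  unfold gaussEnsemble
  infer_instance

theorem measurePreserving_gaussEnsemble_apply (i : Fin n) (j : Fin p) :
    MeasurePreserving (fun Z : Fin n → Fin p → ℝ => Z i j) (gaussEnsemble n p)
      (gaussianReal 0 1) :=
  (measurePreserving_eval (fun _ : Fin p => gaussianReal 0 1) j).comp
    (measurePreserving_eval (fun _ : Fin n => Measure.pi fun _ : Fin p => gaussianReal 0 1) i)

theorem memLp_gaussEnsemble_apply (i : Fin n) (j : Fin p) (q : NNReal) :
    MemLp (fun Z : Fin n → Fin p → ℝ => Z i j) q (gaussEnsemble n p) :=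
  (memLp_id_gaussianReal q).comp_measurePreserving (measurePreserving_gaussEnsemble_apply i j)

theorem integral_sq_gaussEnsemble_apply (i : Fin n) (j : Fin p) :
    ∫ Z, Z i j ^ 2 ∂gaussEnsemble n p = 1 := by
  have hentry := measurePreserving_gaussEnsemble_apply i j
  have hvar := variance_of_integral_eq_zero (μ := gaussianReal 0 1) (X := id) (by fun_prop)
    (by simp)
  rw [variance_id_gaussianReal, ← hentry.map_eq,
    integral_map hentry.measurable.aemeasurable (by fun_prop)] at hvar
  simpa using hvar.symm

theorem integral_apply_mul_gaussEnsemble {f f' : Matrix (Fin n) (Fin p) ℝ → ℝ} {i : Fin n}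
    {j : Fin p} (hderiv : ∀ Z, HasLineDerivAt ℝ f (f' Z) Z (single i j 1))
    (hf : Integrable (fun Z => f (of Z)) (gaussEnsemble n p))
    (hf' : Integrable (fun Z => f' (of Z)) (gaussEnsemble n p))
    (hmul : Integrable (fun Z => Z i j * f (of Z)) (gaussEnsemble n p)) :
    ∫ Z, Z i j * f (of Z) ∂gaussEnsemble n p = ∫ Z, f' (of Z) ∂gaussEnsemble n p := by
  have hcurry := measurePreserving_curry fun (_ : Fin n) (_ : Fin p) => gaussianReal 0 1
  have hsingle : Function.curry (Pi.single (i, j) (1 : ℝ)) = (single i j 1 : Matrix _ _ ℝ) := by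
    ext a b
    simp [Function.curry, single_apply, Pi.single_apply, eq_comm]
  have hderiv' (z : Fin n × Fin p → ℝ) : HasLineDerivAt ℝ (fun z => f (of (Function.curry z)))
      (f' (of (Function.curry z))) z (Pi.single (i, j) 1) := by
    have := hderiv (of (Function.curry z))
    rwa [← hsingle] at this
  have hmul' : Integrable (fun z => z (i, j) * f (of (Function.curry z)))
      (Measure.pi fun _ : Fin n × Fin p => gaussianReal 0 1) :=
    hcurry.integrable_comp_of_integrable hmul
  have hstein := integral_sub_mul_pi_gaussianReal (μ := 0) (v := 1) hderiv'
    (hcurry.integrable_comp_of_integrable hf) (hcurry.integrable_comp_of_integrable hf')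
    (by simpa using hmul')
  simp only [Pi.zero_apply, Pi.one_apply, sub_zero, NNReal.coe_one, one_mul] at hstein
  rw [gaussEnsemble, ← hcurry.integral_comp', ← hcurry.integral_comp']
  exact hstein

end GaussEnsemble

section ResolventMoments

variable {n p : ℕ}

theorem integrable_comp_of_gaussEnsemble {f : Matrix (Fin n) (Fin p) ℝ → ℝ} (hf : Continuous f)
    {C : ℝ} (hC : ∀ Z, |f Z| ≤ C) : Integrable (fun Z => f (of Z)) (gaussEnsemble n p) :=
  have hf' : Continuous fun Z : Fin n → Fin p → ℝ => f (of Z) := hf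
  Integrable.of_bound hf'.aestronglyMeasurable C (ae_of_all _ fun Z => hC (of Z))

variable {d : ℝ}

theorem integrable_trace_gramResolvent_pow (hd : 0 < d) (k : ℕ) :
    Integrable (fun Z => (gramResolvent d (of Z) ^ k).trace) (gaussEnsemble n p) :=
  integrable_comp_of_gaussEnsemble ((continuous_gramResolvent hd).pow k).matrix_trace fun Z =>
    (abs_of_nonneg (posSemidef_gramResolvent_pow Z hd k).trace_nonneg).trans_le
      (trace_gramResolvent_pow_le Z hd k)

theorem integrable_mul_gramResolvent_pow_apply (hd : 0 < d) (k : ℕ) (i : Fin n) (j : Fin p) :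
    Integrable (fun Z => (of Z * gramResolvent d (of Z) ^ (k + 1)) i j) (gaussEnsemble n p) :=
  integrable_comp_of_gaussEnsemble
    ((continuous_id.matrix_mul ((continuous_gramResolvent hd).pow _)).matrix_elem i j)
    fun Z => abs_mul_gramResolvent_pow_apply_le Z hd k i j

theorem integrable_apply_mul_mul_gramResolvent_pow_apply (hd : 0 < d) (k : ℕ) (i : Fin n)
    (j : Fin p) : Integrable (fun Z => Z i j * (of Z * gramResolvent d (of Z) ^ (k + 1)) i j)
      (gaussEnsemble n p) :=
  ((memLp_gaussEnsemble_apply i j 1).integrable le_rfl).mul_bdd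
    (integrable_mul_gramResolvent_pow_apply hd k i j).aestronglyMeasurable
    (ae_of_all _ fun Z => abs_mul_gramResolvent_pow_apply_le (of Z) hd k i j)

theorem integrable_partialMulGramResolventPow (hd : 0 < d) (k : ℕ) (i : Fin n) (j : Fin p) :
    Integrable (fun Z => partialMulGramResolventPow d k i j (of Z)) (gaussEnsemble n p) :=
  let ⟨_, hC⟩ := exists_abs_partialMulGramResolventPow_le hd k i j
  integrable_comp_of_gaussEnsemble (continuous_partialMulGramResolventPow hd k i j) hC

theorem integral_trace_gram_mul_gramResolvent_pow (hd : 0 < d) (k : ℕ) :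
    ∫ Z, ((of Z)ᵀ * of Z * gramResolvent d (of Z) ^ (k + 1)).trace ∂gaussEnsemble n p =
      ∫ Z, ∑ i, ∑ j, partialMulGramResolventPow d k i j (of Z) ∂gaussEnsemble n p := by
  have hint := integrable_apply_mul_mul_gramResolvent_pow_apply (n := n) (p := p) hd k
  have hint' := integrable_partialMulGramResolventPow (n := n) (p := p) hd k
  have hentries (Z : Fin n → Fin p → ℝ) :
      ((of Z)ᵀ * of Z * gramResolvent d (of Z) ^ (k + 1)).trace =
        ∑ i, ∑ j, Z i j * (of Z * gramResolvent d (of Z) ^ (k + 1)) i j := by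
    rw [Matrix.mul_assoc]
    exact (sum_sum_mul_eq_trace_transpose_mul (of Z) _).symm
  simp_rw [hentries]
  rw [integral_finsetSum _ fun i _ => integrable_finsetSum _ fun j _ => hint i j,
    integral_finsetSum _ fun i _ => integrable_finsetSum _ fun j _ => hint' i j]
  refine Finset.sum_congr rfl fun i _ => ?_
  rw [integral_finsetSum _ fun j _ => hint i j, integral_finsetSum _ fun j _ => hint' i j]
  exact Finset.sum_congr rfl fun j _ => integral_apply_mul_gaussEnsemble
    (fun Z => hasLineDerivAt_single_mul_gramResolvent_pow_apply Z hd k i j)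
    (integrable_mul_gramResolvent_pow_apply hd k i j) (hint' i j) (hint i j)

theorem sub_mul_integral_trace_gramResolvent_pow_le (hd : 0 < d) (k : ℕ) :
    ((n : ℝ) - (k + 1) * (p + 1)) *
        ∫ Z, (gramResolvent d (of Z) ^ (k + 1)).trace ∂gaussEnsemble n p ≤
      ∫ Z, (gramResolvent d (of Z) ^ k).trace ∂gaussEnsemble n p := by
  calc ((n : ℝ) - (k + 1) * (p + 1)) *
        ∫ Z, (gramResolvent d (of Z) ^ (k + 1)).trace ∂gaussEnsemble n p
      = ∫ Z, ((n : ℝ) - (k + 1) * (p + 1)) * (gramResolvent d (of Z) ^ (k + 1)).trace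
          ∂gaussEnsemble n p := (integral_const_mul _ _).symm
    _ ≤ ∫ Z, ∑ i, ∑ j, partialMulGramResolventPow d k i j (of Z) ∂gaussEnsemble n p :=
        integral_mono ((integrable_trace_gramResolvent_pow hd _).const_mul _)
          (integrable_finsetSum _ fun i _ => integrable_finsetSum _ fun j _ =>
            integrable_partialMulGramResolventPow hd k i j) fun Z => by
          simpa using
            sub_mul_trace_gramResolvent_pow_le_sum_partialMulGramResolventPow (of Z) hd k
    _ = ∫ Z, ((of Z)ᵀ * of Z * gramResolvent d (of Z) ^ (k + 1)).trace ∂gaussEnsemble n p :=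
        (integral_trace_gram_mul_gramResolvent_pow hd k).symm
    _ ≤ ∫ Z, (gramResolvent d (of Z) ^ k).trace ∂gaussEnsemble n p :=
        integral_mono_of_nonneg
          (ae_of_all _ fun Z => trace_gram_mul_gramResolvent_pow_nonneg (of Z) hd _)
          (integrable_trace_gramResolvent_pow hd k)
          (ae_of_all _ fun Z => trace_gram_mul_gramResolvent_pow_le (of Z) hd k)

theorem integral_trace_gramResolvent_pow_le (hd : 0 < d) {s : ℕ} (hs : s * (p + 1) < n) {k : ℕ}
    (hk : k ≤ s) :
    ∫ Z, (gramResolvent d (of Z) ^ k).trace ∂gaussEnsemble n p ≤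
      p / ((n : ℝ) - s * (p + 1)) ^ k := by
  have hgap : 0 < (n : ℝ) - s * (p + 1) := sub_pos.2 (by exact_mod_cast hs)
  induction k with
  | zero => simp
  | succ k ih =>
    have hks : (k : ℝ) + 1 ≤ s := by exact_mod_cast hk
    rw [pow_succ, ← div_div, le_div_iff₀' hgap]
    calc ((n : ℝ) - s * (p + 1)) *
          ∫ Z, (gramResolvent d (of Z) ^ (k + 1)).trace ∂gaussEnsemble n p
        ≤ ((n : ℝ) - (k + 1) * (p + 1)) *
            ∫ Z, (gramResolvent d (of Z) ^ (k + 1)).trace ∂gaussEnsemble n p := by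
          gcongr
          exact integral_nonneg fun Z => (posSemidef_gramResolvent_pow _ hd _).trace_nonneg
      _ ≤ ∫ Z, (gramResolvent d (of Z) ^ k).trace ∂gaussEnsemble n p :=
          sub_mul_integral_trace_gramResolvent_pow_le hd k
      _ ≤ p / ((n : ℝ) - s * (p + 1)) ^ k := ih (Nat.le_of_succ_le hk)

end ResolventMoments

section Fatou

variable {α ι E : Type*} [MeasurableSpace α] {μ : Measure α} [NormedAddCommGroup E] {u : Filter ι}
  [u.NeBot] [u.IsCountablyGenerated] {f : ι → α → E} {g : α → E}

theorem lintegral_enorm_le_of_tendsto_ae {C : ENNReal} (hf : ∀ i, AEStronglyMeasurable (f i) μ)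
    (hC : ∀ i, ∫⁻ x, ‖f i x‖ₑ ∂μ ≤ C)
    (hlim : ∀ᵐ x ∂μ, Tendsto (fun i => f i x) u (nhds (g x))) : ∫⁻ x, ‖g x‖ₑ ∂μ ≤ C :=
  calc ∫⁻ x, ‖g x‖ₑ ∂μ
      = ∫⁻ x, liminf (fun i => ‖f i x‖ₑ) u ∂μ :=
        lintegral_congr_ae (hlim.mono fun _ hx => hx.enorm.liminf_eq.symm)
    _ ≤ liminf (fun i => ∫⁻ x, ‖f i x‖ₑ ∂μ) u := lintegral_liminf_le' fun i => (hf i).enorm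
    _ ≤ liminf (fun _ => C) u := liminf_le_liminf (Eventually.of_forall hC)
    _ = C := liminf_const C

theorem integrable_and_integral_norm_le_of_tendsto_ae {C : ℝ} (hf : ∀ i, Integrable (f i) μ)
    (hC : ∀ i, ∫ x, ‖f i x‖ ∂μ ≤ C)
    (hlim : ∀ᵐ x ∂μ, Tendsto (fun i => f i x) u (nhds (g x))) :
    Integrable g μ ∧ ∫ x, ‖g x‖ ∂μ ≤ C := by
  obtain ⟨i⟩ := u.nonempty_of_neBot
  have hC0 : 0 ≤ C := (integral_nonneg fun x => norm_nonneg (f i x)).trans (hC i)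
  have hle := lintegral_enorm_le_of_tendsto_ae (C := ENNReal.ofReal C) (fun i => (hf i).1)
    (fun i => by
      rw [← ofReal_integral_norm_eq_lintegral_enorm (hf i)]
      exact ENNReal.ofReal_le_ofReal (hC i)) hlim
  have hg : Integrable g μ :=
    ⟨aestronglyMeasurable_of_tendsto_ae u (fun i => (hf i).1) hlim,
      hle.trans_lt ENNReal.ofReal_lt_top⟩
  refine ⟨hg, (ENNReal.ofReal_le_ofReal_iff hC0).1 ?_⟩
  rwa [ofReal_integral_norm_eq_lintegral_enorm hg]

end Fatou

section InverseMoments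

variable {n p : ℕ}

theorem ae_isUnit_gram (h : p + 1 < n) :
    ∀ᵐ Z ∂gaussEnsemble n p, IsUnit ((of Z)ᵀ * of Z) := by
  set C : ℝ := p / ((n : ℝ) - (p + 1))
  have hbound {d : ℝ} (hd : 0 < d) :
      (gaussEnsemble n p).real {Z | ¬IsUnit ((of Z)ᵀ * of Z)} ≤ d * C := by
    rw [← inv_mul_le_iff₀ hd]
    calc d⁻¹ * (gaussEnsemble n p).real {Z | ¬IsUnit ((of Z)ᵀ * of Z)}
        ≤ d⁻¹ * (gaussEnsemble n p).real {Z | d⁻¹ ≤ (gramResolvent d (of Z) ^ 1).trace} := by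
          refine mul_le_mul_of_nonneg_left (measureReal_mono fun Z hZ => ?_) (by positivity)
          simpa using inv_le_trace_gramResolvent_of_not_isUnit (of Z) hd hZ
      _ ≤ ∫ Z, (gramResolvent d (of Z) ^ 1).trace ∂gaussEnsemble n p :=
          mul_meas_ge_le_integral_of_nonneg
            (ae_of_all _ fun Z => (posSemidef_gramResolvent_pow _ hd 1).trace_nonneg)
            (integrable_trace_gramResolvent_pow hd 1) d⁻¹
      _ ≤ C := by
          simpa [C] using integral_trace_gramResolvent_pow_le hd (s := 1) (by simpa using h) le_rfl
  have hlim : Tendsto (fun d : ℝ => d * C) (nhdsWithin 0 (Set.Ioi 0)) (nhds 0) :=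
    ((continuous_mul_const C).tendsto' 0 0 (zero_mul C)).mono_left nhdsWithin_le_nhds
  refine ae_iff.2 ((measureReal_eq_zero_iff).1 (le_antisymm ?_ measureReal_nonneg))
  exact ge_of_tendsto hlim (eventually_mem_nhdsWithin.mono fun d hd => hbound hd)

theorem integrable_and_integral_norm_trace_gram_inv_pow_le {s : ℕ} (h : p + 1 < n)
    (hs : s * (p + 1) < n) :
    Integrable (fun Z => (((of Z)ᵀ * of Z)⁻¹ ^ s).trace) (gaussEnsemble n p) ∧
      ∫ Z, ‖(((of Z)ᵀ * of Z)⁻¹ ^ s).trace‖ ∂gaussEnsemble n p ≤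
        p / ((n : ℝ) - s * (p + 1)) ^ s := by
  have hpos (m : ℕ) : 0 < 1 / ((m : ℝ) + 1) := Nat.one_div_pos_of_nat
  refine integrable_and_integral_norm_le_of_tendsto_ae (u := atTop)
    (fun m => integrable_trace_gramResolvent_pow (hpos m) s) (fun m => ?_) ?_
  · simp_rw [Real.norm_of_nonneg (posSemidef_gramResolvent_pow (of _) (hpos m) s).trace_nonneg]
    exact integral_trace_gramResolvent_pow_le (hpos m) hs le_rfl
  · filter_upwards [ae_isUnit_gram h] with Z hZ
    have hlim := (tendsto_gramResolvent hZ).comp tendsto_one_div_add_atTop_nhds_zero_nat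
    exact (continuous_id.matrix_trace.tendsto _).comp (hlim.pow s)

theorem posDef_wishartOf {Z : Fin n → Fin p → ℝ} (hn : n ≠ 0) (hZ : IsUnit ((of Z)ᵀ * of Z)) :
    (wishartOf Z).PosDef :=
  ((posSemidef_conjTranspose_mul_self (of Z)).posDef_iff_isUnit.2 hZ).smul
    (inv_pos.2 (by positivity))

theorem trace_inv_wishartOf_pow {Z : Fin n → Fin p → ℝ} (hn : n ≠ 0)
    (hZ : IsUnit ((of Z)ᵀ * of Z)) (s : ℕ) :
    ((wishartOf Z)⁻¹ ^ s).trace = n ^ s * (((of Z)ᵀ * of Z)⁻¹ ^ s).trace := by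
  have hn' : (n : ℝ) ≠ 0 := by exact_mod_cast hn
  have hinv : (wishartOf Z)⁻¹ = (n : ℝ) • ((of Z)ᵀ * of Z)⁻¹ := by
    simpa [wishartOf, Units.smul_def] using
      inv_smul' _ (Units.mk0 (n : ℝ) hn')⁻¹ ((isUnit_iff_isUnit_det _).1 hZ)
  rw [hinv, smul_pow, trace_smul, smul_eq_mul]

theorem trace_wishartOf (Z : Fin n → Fin p → ℝ) :
    (wishartOf Z).trace = (n : ℝ)⁻¹ * ∑ i, ∑ j, Z i j ^ 2 := by
  simp_rw [wishartOf, trace_smul, smul_eq_mul, ← sum_sum_mul_eq_trace_transpose_mul, sq, of_apply]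

theorem integrable_sq_gaussEnsemble_apply (i : Fin n) (j : Fin p) :
    Integrable (fun Z => Z i j ^ 2) (gaussEnsemble n p) :=
  (memLp_gaussEnsemble_apply i j 2).integrable_sq

theorem integrable_trace_wishartOf :
    Integrable (fun Z => (wishartOf Z).trace) (gaussEnsemble n p) := by
  simp_rw [trace_wishartOf]
  exact (integrable_finsetSum _ fun i _ => integrable_finsetSum _ fun j _ =>
    integrable_sq_gaussEnsemble_apply i j).const_mul _

theorem integral_trace_wishartOf (hn : n ≠ 0) :
    ∫ Z, (wishartOf Z).trace ∂gaussEnsemble n p = p := by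
  simp_rw [trace_wishartOf]
  rw [integral_const_mul, integral_finsetSum _ fun i _ => integrable_finsetSum _ fun j _ =>
    integrable_sq_gaussEnsemble_apply i j]
  simp_rw [integral_finsetSum _ fun j _ => integrable_sq_gaussEnsemble_apply _ j,
    integral_sq_gaussEnsemble_apply]
  simp [hn]

theorem integrable_trace_inv_wishartOf_pow {s : ℕ} (h : p + 1 < n) (hs : s * (p + 1) < n) :
    Integrable (fun Z => ((wishartOf Z)⁻¹ ^ s).trace) (gaussEnsemble n p) := by
  have hint := (integrable_and_integral_norm_trace_gram_inv_pow_le h hs).1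
  refine (hint.const_mul (n ^ s : ℝ)).congr ?_
  filter_upwards [ae_isUnit_gram h] with Z hZ
  exact (trace_inv_wishartOf_pow (by lia) hZ s).symm

theorem integral_trace_inv_wishartOf_pow_le {s : ℕ} (h : p + 1 < n) (hs : s * (p + 1) < n) :
    ∫ Z, ((wishartOf Z)⁻¹ ^ s).trace ∂gaussEnsemble n p ≤
      p * ((n : ℝ) / (n - s * (p + 1))) ^ s := by
  obtain ⟨hint, hle⟩ := integrable_and_integral_norm_trace_gram_inv_pow_le h hs
  calc ∫ Z, ((wishartOf Z)⁻¹ ^ s).trace ∂gaussEnsemble n p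
      = n ^ s * ∫ Z, (((of Z)ᵀ * of Z)⁻¹ ^ s).trace ∂gaussEnsemble n p := by
        rw [← integral_const_mul]
        exact integral_congr_ae ((ae_isUnit_gram h).mono fun Z hZ =>
          trace_inv_wishartOf_pow (by lia) hZ s)
    _ ≤ n ^ s * (p / ((n : ℝ) - s * (p + 1)) ^ s) := by
        gcongr
        exact (integral_mono hint hint.norm fun Z => Real.le_norm_self _).trans hle
    _ = p * ((n : ℝ) / (n - s * (p + 1))) ^ s := by rw [div_pow]; ring

theorem le_integral_trace_inv_wishartOf_pow {s : ℕ} (h : p + 1 < n) (hs : s * (p + 1) < n) :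
    (p : ℝ) ≤ ∫ Z, ((wishartOf Z)⁻¹ ^ s).trace ∂gaussEnsemble n p := by
  have hn : n ≠ 0 := by lia
  have hint : Integrable (fun Z => (wishartOf Z).trace - p) (gaussEnsemble n p) :=
    integrable_trace_wishartOf.sub (integrable_const _)
  calc (p : ℝ) = ∫ Z, (p - s * ((wishartOf Z).trace - p)) ∂gaussEnsemble n p := by
        rw [integral_sub (integrable_const _) (hint.const_mul _), integral_const_mul,
          integral_sub integrable_trace_wishartOf (integrable_const _),
          integral_trace_wishartOf hn]
        simp
    _ ≤ ∫ Z, ((wishartOf Z)⁻¹ ^ s).trace ∂gaussEnsemble n p := by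
        refine integral_mono_ae ((integrable_const _).sub (hint.const_mul _))
          (integrable_trace_inv_wishartOf_pow h hs) ?_
        filter_upwards [ae_isUnit_gram h] with Z hZ
        simpa using card_sub_mul_trace_sub_card_le_trace_inv_pow (posDef_wishartOf hn hZ) s

end InverseMoments

section Limit

variable {p : ℕ → ℕ}

theorem tendsto_mul_add_one_div (h0 : Tendsto (fun n => (p n : ℝ) / n) atTop (nhds 0)) (s : ℕ) :
    Tendsto (fun n => (s * (p n + 1) : ℝ) / n) atTop (nhds 0) := by
  simpa [add_div, mul_div_assoc] using
    (h0.add tendsto_one_div_atTop_nhds_zero_nat).const_mul (s : ℝ)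

theorem eventually_mul_add_one_lt (h0 : Tendsto (fun n => (p n : ℝ) / n) atTop (nhds 0)) (s : ℕ) :
    ∀ᶠ n in atTop, s * (p n + 1) < n := by
  filter_upwards [(tendsto_mul_add_one_div h0 s).eventually_lt_const one_pos,
    eventually_gt_atTop 0] with n hlt hn
  rw [div_lt_one (by exact_mod_cast hn)] at hlt
  exact_mod_cast hlt

theorem tendsto_div_sub_mul_add_one (h0 : Tendsto (fun n => (p n : ℝ) / n) atTop (nhds 0))
    (s : ℕ) : Tendsto (fun n : ℕ => (n : ℝ) / (n - s * (p n + 1))) atTop (nhds 1) := by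
  have hinv := ((tendsto_mul_add_one_div h0 s).const_sub 1).inv₀ (by norm_num)
  rw [sub_zero, inv_one] at hinv
  refine hinv.congr' ((eventually_gt_atTop 0).mono fun n hn => ?_)
  have hn' : (n : ℝ) ≠ 0 := by positivity
  rw [one_sub_div hn', inv_div]

theorem inverse_wishart_trace_limit_general (s : ℕ) (p : ℕ → ℕ) (hp : ∀ᶠ n in atTop, p n ≠ 0)
    (h0 : Tendsto (fun n => (p n : ℝ) / (n : ℝ)) atTop (nhds 0)) :
    Tendsto (fun n => (1 / (p n : ℝ)) *
      ∫ Z, ((wishartOf Z)⁻¹ ^ s).trace ∂gaussEnsemble n (p n)) atTop (nhds 1) := by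
  have hone : ∀ᶠ n in atTop, p n + 1 < n := by simpa using eventually_mul_add_one_lt h0 1
  have hupper : Tendsto (fun n : ℕ => ((n : ℝ) / (n - s * (p n + 1))) ^ s) atTop (nhds 1) := by
    simpa using (tendsto_div_sub_mul_add_one h0 s).pow s
  refine tendsto_of_tendsto_of_tendsto_of_le_of_le' tendsto_const_nhds hupper ?_ ?_
  · filter_upwards [hp, hone, eventually_mul_add_one_lt h0 s] with n hpn h hs
    rw [one_div_mul_eq_div, one_le_div₀ (by positivity)]
    exact le_integral_trace_inv_wishartOf_pow h hs
  · filter_upwards [hp, hone, eventually_mul_add_one_lt h0 s] with n hpn h hs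
    rw [one_div_mul_eq_div, div_le_iff₀' (by positivity)]
    exact integral_trace_inv_wishartOf_pow_le h hs

end Limit

/-- If `s ≥ 1`, `p(n) → ∞` and `p(n)/n → 0`, then
`(1/p(n)) E[tr(Y^{-s})] → 1` as `n → ∞`. -/
theorem inverse_wishart_trace_limit (s : ℕ) (hs : 1 ≤ s) (p : ℕ → ℕ)
    (hpinf : Filter.Tendsto (fun n => (p n : ℝ)) Filter.atTop Filter.atTop)
    (h0 : Filter.Tendsto (fun n => (p n : ℝ) / (n : ℝ)) Filter.atTop (nhds 0)) :
    Filter.Tendsto (fun n =>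
      (1 / (p n : ℝ)) *
        ∫ Z, Matrix.trace ((wishartOf Z)⁻¹ ^ s) ∂gaussEnsemble n (p n))
      Filter.atTop (nhds 1) :=
  inverse_wishart_trace_limit_general s p
    ((hpinf.eventually_gt_atTop 0).mono fun _ hn => by exact_mod_cast hn.ne') h0
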